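/- Let H⁻, H⁺ be complex separable Hilbert spaces and G₁, …, G_N : H⁻ → H⁺ bounded linear operators. Then the operator ζG := ∑_{k=1}^N ζ_k G_k is unitary for every ζ = (ζ₁,…,ζ_N) in the unit torus T^N (|ζ_k| = 1 for all k) if and only if the following four conditions hold: ∑_{k=1}^N G_k*G_k = I_{H⁻}; G_k*G_j = 0 for all k ≠ j; ∑_{k=1}^N G_k G_k* = I_{H⁺}; and G_k G_j* = 0 for all k ≠ j. -/

import Mathlib

open ContinuousLinearMap

noncomputable section

/-!
Write `P ζ = ∑ k, ζ k • v k` and let `B` be sesquilinear. Moving one coordinate `ζ a = z` around the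
unit circle moves `P ζ` along `u + z • v a` with `u` fixed, so if `B (P ζ) (P ζ)` is constant on the
torus, then polarization over the fourth roots of unity gives `B (v a) u = 0`. Here
`B (v a) u = ∑ k ≠ a, ζ k • B (v a) (v k)`, and flipping the sign of one remaining `ζ b` isolates
`B (v a) (v b) = 0`. Taking `B S T = S* T` gives the conditions on `G k* G j`; those on `G k G j*`
are the same statement for the adjoint family, since the torus is invariant under conjugation.
-/

section Torus

variable {ι 𝕜 V : Type*} [AddCommGroup V]

lemma sum_update_smul [DecidableEq ι] [Ring 𝕜] [Module 𝕜 V] {s : Finset ι} {a : ι} (ha : a ∈ s)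
    (ζ : ι → 𝕜) (z : 𝕜) (v : ι → V) :
    ∑ k ∈ s, Function.update ζ a z k • v k = ∑ k ∈ s.erase a, ζ k • v k + z • v a := by
  rw [← Finset.sum_erase_add s _ ha, Function.update_self]
  congr 1
  exact Finset.sum_congr rfl fun k hk => by
    rw [Function.update_of_ne (Finset.ne_of_mem_erase hk)]

lemma norm_update_eq_one [DecidableEq ι] [Norm 𝕜] {ζ : ι → 𝕜} (hζ : ∀ k, ‖ζ k‖ = 1) (a : ι)
    {z : 𝕜} (hz : ‖z‖ = 1) (k : ι) : ‖Function.update ζ a z k‖ = 1 :=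
  (Function.forall_update_iff ζ fun _ w => ‖w‖ = 1).mpr ⟨hz, fun k _ => hζ k⟩ k

lemma eq_zero_of_forall_torus_sum_smul_eq [NormedField 𝕜] [NeZero (2 : 𝕜)] [Module 𝕜 V]
    {s : Finset ι} {v : ι → V} {c : V}
    (h : ∀ ζ : ι → 𝕜, (∀ k, ‖ζ k‖ = 1) → ∑ k ∈ s, ζ k • v k = c) {a : ι} (ha : a ∈ s) :
    v a = 0 := by
  classical
  have moved (z : 𝕜) (hz : ‖z‖ = 1) : ∑ k ∈ s.erase a, (1 : 𝕜) • v k + z • v a = c :=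
    (sum_update_smul ha 1 z v).symm.trans (h _ (norm_update_eq_one (fun _ => norm_one) a hz))
  have neg_eq : (1 : 𝕜) • v a = (-1 : 𝕜) • v a :=
    add_left_cancel ((moved 1 (by simp)).trans (moved (-1) (by simp)).symm)
  have two_smul_eq : (2 : 𝕜) • v a = 0 := by
    rwa [neg_smul, eq_neg_iff_add_eq_zero, ← add_smul, one_add_one_eq_two] at neg_eq
  exact (smul_eq_zero.mp two_smul_eq).resolve_left two_ne_zero

end Torus

section Sesquilinear

variable {E V : Type*} [AddCommGroup E] [Module ℂ E] [AddCommGroup V] [Module ℂ V]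
  (B : E →ₗ⋆[ℂ] E →ₗ[ℂ] V)

lemma sesquilinear_polarization (x y : E) :
    (4 : ℂ) • B x y = B (y + x) (y + x) - B (y - x) (y - x)
      + Complex.I • B (y + Complex.I • x) (y + Complex.I • x)
      - Complex.I • B (y - Complex.I • x) (y - Complex.I • x) := by
  simp only [map_add, map_sub, LinearMap.add_apply, LinearMap.sub_apply, map_smul, map_smulₛₗ,
    LinearMap.smul_apply, Complex.conj_I]
  match_scalars <;> ring_nf <;> norm_num [Complex.I_sq]

variable {B}

lemma sesquilinear_apply_eq_zero_of_forall_circle {x u : E} {c : V}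
    (h : ∀ z : ℂ, ‖z‖ = 1 → B (u + z • x) (u + z • x) = c) : B x u = 0 := by
  have four_smul_eq : (4 : ℂ) • B x u = 0 := by
    have h₁ := h 1 (by simp)
    have h₂ := h (-1) (by simp)
    have h₃ := h Complex.I (by simp)
    have h₄ := h (-Complex.I) (by simp)
    simp only [one_smul, neg_smul, ← sub_eq_add_neg] at h₁ h₂ h₃ h₄
    rw [sesquilinear_polarization, h₁, h₂, h₃, h₄, sub_self, zero_add, sub_self]
  exact (smul_eq_zero.mp four_smul_eq).resolve_left (by norm_num)

variable {ι : Type*} [Fintype ι] {v : ι → E}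

lemma sesquilinear_offDiag_eq_zero_of_forall_torus {c : V}
    (h : ∀ ζ : ι → ℂ, (∀ k, ‖ζ k‖ = 1) → B (∑ k, ζ k • v k) (∑ k, ζ k • v k) = c)
    {a b : ι} (hab : a ≠ b) : B (v a) (v b) = 0 := by
  classical
  have row_eq_zero (ζ : ι → ℂ) (hζ : ∀ k, ‖ζ k‖ = 1) :
      ∑ k ∈ Finset.univ.erase a, ζ k • B (v a) (v k) = 0 := by
    have circle (z : ℂ) (hz : ‖z‖ = 1) := h _ (norm_update_eq_one hζ a hz)
    simp only [sum_update_smul (Finset.mem_univ a)] at circle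
    simpa only [map_sum, map_smul] using sesquilinear_apply_eq_zero_of_forall_circle circle
  exact eq_zero_of_forall_torus_sum_smul_eq row_eq_zero
    (Finset.mem_erase.mpr ⟨hab.symm, Finset.mem_univ b⟩)

lemma sesquilinear_torus_sum_self (hB : ∀ k j, k ≠ j → B (v k) (v j) = 0) {ζ : ι → ℂ}
    (hζ : ∀ k, ‖ζ k‖ = 1) :
    B (∑ k, ζ k • v k) (∑ k, ζ k • v k) = ∑ k, B (v k) (v k) := by
  simp only [LinearMap.map_sum₂, LinearMap.map_smulₛₗ₂]
  refine Finset.sum_congr rfl fun k _ => ?_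
  have row : B (v k) (∑ j, ζ j • v j) = ζ k • B (v k) (v k) := by
    simp only [map_sum, map_smul]
    exact Finset.sum_eq_single k (fun j _ hjk => by rw [hB k j hjk.symm, smul_zero]) (by simp)
  rw [row, smul_smul, Complex.conj_mul', hζ k, Complex.ofReal_one, one_pow, one_smul]

theorem sesquilinear_forall_torus_eq_iff {c : V} :
    (∀ ζ : ι → ℂ, (∀ k, ‖ζ k‖ = 1) → B (∑ k, ζ k • v k) (∑ k, ζ k • v k) = c) ↔
      ∑ k, B (v k) (v k) = c ∧ ∀ k j, k ≠ j → B (v k) (v j) = 0 := by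
  constructor
  · intro h
    have offDiag (k j : ι) (hkj : k ≠ j) := sesquilinear_offDiag_eq_zero_of_forall_torus h hkj
    refine ⟨?_, offDiag⟩
    rw [← sesquilinear_torus_sum_self offDiag (ζ := 1) fun _ => norm_one]
    exact h 1 fun _ => norm_one
  · rintro ⟨diag, offDiag⟩ ζ hζ
    rw [sesquilinear_torus_sum_self offDiag hζ, diag]

end Sesquilinear

section Pencil

variable {H K : Type*} [NormedAddCommGroup H] [InnerProductSpace ℂ H] [CompleteSpace H]
  [NormedAddCommGroup K] [InnerProductSpace ℂ K] [CompleteSpace K]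

/-- The operator-valued inner product `⟨S, T⟩ = S* T` on bounded operators `H → K`, conjugate-linear
in `S`. It turns the conditions on products of the coefficients of a pencil into statements about a
sesquilinear map. -/
def adjointCompForm : (H →L[ℂ] K) →ₗ⋆[ℂ] (H →L[ℂ] K) →ₗ[ℂ] (H →L[ℂ] H) :=
  LinearMap.mk₂'ₛₗ (starRingEnd ℂ) (RingHom.id ℂ) (fun S T => adjoint S ∘L T)
    (fun S S' T => by rw [map_add, add_comp])
    (fun z S T => by rw [map_smulₛₗ, smul_comp])
    (fun S T T' => comp_add _ _ _)
    (fun z S T => comp_smul _ _ _)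

variable {ι : Type*} [Fintype ι] (G : ι → (H →L[ℂ] K))

theorem forall_torus_adjoint_comp_pencil_eq_iff (A : H →L[ℂ] H) :
    (∀ ζ : ι → ℂ, (∀ k, ‖ζ k‖ = 1) →
        adjoint (∑ k, ζ k • G k) ∘L (∑ k, ζ k • G k) = A) ↔
      ∑ k, adjoint (G k) ∘L G k = A ∧ ∀ k j, k ≠ j → adjoint (G k) ∘L G j = 0 :=
  sesquilinear_forall_torus_eq_iff (B := adjointCompForm) (v := G)

theorem forall_torus_pencil_comp_adjoint_eq_iff (A : K →L[ℂ] K) :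
    (∀ ζ : ι → ℂ, (∀ k, ‖ζ k‖ = 1) →
        (∑ k, ζ k • G k) ∘L adjoint (∑ k, ζ k • G k) = A) ↔
      ∑ k, G k ∘L adjoint (G k) = A ∧ ∀ k j, k ≠ j → G k ∘L adjoint (G j) = 0 := by
  have adjoint_pencil (ζ : ι → ℂ) :
      ∑ k, star (ζ k) • adjoint (G k) = adjoint (∑ k, ζ k • G k) := by
    simp only [map_sum, map_smulₛₗ, starRingEnd_apply]
  have key := forall_torus_adjoint_comp_pencil_eq_iff (fun k => adjoint (G k)) A
  rw [(star_involutive (R := ι → ℂ)).surjective.forall] at key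
  simpa only [adjoint_pencil, adjoint_adjoint, Pi.star_apply, norm_star] using key

theorem unitary_pencil_iff_general :
    (∀ ζ : ι → ℂ, (∀ k, ‖ζ k‖ = 1) →
        (adjoint (∑ k, ζ k • G k) ∘L (∑ k, ζ k • G k) = ContinuousLinearMap.id ℂ H ∧
         (∑ k, ζ k • G k) ∘L adjoint (∑ k, ζ k • G k) = ContinuousLinearMap.id ℂ K)) ↔
    ((∑ k, adjoint (G k) ∘L G k = ContinuousLinearMap.id ℂ H) ∧
     (∀ k j, k ≠ j → adjoint (G k) ∘L G j = 0) ∧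
     (∑ k, G k ∘L adjoint (G k) = ContinuousLinearMap.id ℂ K) ∧
     (∀ k j, k ≠ j → G k ∘L adjoint (G j) = 0)) := by
  simp only [imp_and, forall_and]
  rw [forall_torus_adjoint_comp_pencil_eq_iff, forall_torus_pencil_comp_adjoint_eq_iff, and_assoc]

end Pencil

/-- for bounded operators `G₁, …, G_N : H⁻ → H⁺` between complex separable
Hilbert spaces, `ζG = ∑ ζ_k G_k` is unitary for every `ζ` in the unit torus `T^N` iff
`∑ G_k* G_k = I`, `G_k* G_j = 0 (k ≠ j)`, `∑ G_k G_k* = I`, and `G_k G_j* = 0 (k ≠ j)`. -/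
theorem unitary_pencil_iff {Nn : ℕ} {Hm Hp : Type*}
    [NormedAddCommGroup Hm] [InnerProductSpace ℂ Hm] [CompleteSpace Hm]
    [TopologicalSpace.SeparableSpace Hm]
    [NormedAddCommGroup Hp] [InnerProductSpace ℂ Hp] [CompleteSpace Hp]
    [TopologicalSpace.SeparableSpace Hp]
    (G : Fin Nn → (Hm →L[ℂ] Hp)) :
    (∀ ζ : Fin Nn → ℂ, (∀ k, ‖ζ k‖ = 1) →
        (adjoint (∑ k, ζ k • G k) ∘L (∑ k, ζ k • G k) = ContinuousLinearMap.id ℂ Hm ∧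
         (∑ k, ζ k • G k) ∘L adjoint (∑ k, ζ k • G k) = ContinuousLinearMap.id ℂ Hp)) ↔
    ((∑ k, adjoint (G k) ∘L G k = ContinuousLinearMap.id ℂ Hm) ∧
     (∀ k j, k ≠ j → adjoint (G k) ∘L G j = 0) ∧
     (∑ k, G k ∘L adjoint (G k) = ContinuousLinearMap.id ℂ Hp) ∧
     (∀ k j, k ≠ j → G k ∘L adjoint (G j) = 0)) :=
  unitary_pencil_iff_general G
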